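/- arXiv:0707.0152 — 2 statements merged into one kernel-verified Lean document; each statement's English description precedes it below -/
import Mathlib

section
/- There exists an absolute constant C > 0 such that for every θ ∈ (0,1) and every positive integer n, ∫_{(0,∞)⁴} G(s,t,u,v) ds dt du dv ≤ C · n^{2-θ} θ^{-2} (1-θ)^{-3}; and there exists an absolute constant c > 0 such that for every θ ∈ (0,1) and every positive integer n with n^{1-θ} ≥ 8, ∫_{(0,∞)⁴} G(s,t,u,v) ds dt du dv ≥ c · n^{2-θ} θ^{-2} (1-θ)^{-3}. -/
open MeasureTheory Set Real

/-- The integrand `G(s,t,u,v)` from the paper's computation of the completely 1-summing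
norm of the identity `OH_n → ℓ^n_p`, with `θ = 2/p'`. Here `p = (s, t, u, v)`. -/
noncomputable def G (θ : ℝ) (n : ℕ) (p : ℝ × ℝ × ℝ × ℝ) : ℝ :=
  (n : ℝ) ^ (2 : ℕ) * p.1 ^ (-1 - 2 * θ) * p.2.1 ^ (-1 - 2 * θ) *
    min (min (min ((n : ℝ)⁻¹ * p.1 ^ (4 : ℝ) * p.2.2.1 ^ (-2 : ℝ) * p.2.2.2 ^ (-2 : ℝ))
                  ((n : ℝ)⁻¹ * p.2.1 ^ (4 : ℝ)))
             (min (p.1 ^ (4 : ℝ) * p.2.2.1 ^ (-2 : ℝ)) (p.2.1 ^ (4 : ℝ) * p.2.2.2 ^ (-2 : ℝ))))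
        (min (min (p.2.2.1 ^ (-2 : ℝ) * p.2.2.2 ^ (-2 : ℝ)) (p.2.2.1 ^ (-2 : ℝ)))
             (min 1 (p.2.2.2 ^ (-2 : ℝ))))

/-- The region of integration. -/
def A (n : ℕ) : Set (ℝ × ℝ × ℝ × ℝ) :=
  {p | 0 < p.1 ∧ 0 < p.2.1 ∧ 0 < p.2.2.1 ∧ 0 < p.2.2.2}

/-!
Integrating a power `x ^ (-1 - p * β)` against the truncated power `min (a * x ^ β) c` gives a
constant times `a ^ p * c ^ (1 - p)`. Since `min (b * t ^ γ) c ^ (1 - p)` is again a truncated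
power, the formula can be iterated, and integrating `s` and `t` out of
`s ^ (-1 - p * β) * t ^ (-1 - q * γ) * min (a * s ^ β) (min (b * t ^ γ) c)` leaves a constant times
`a ^ p * b ^ q * c ^ (1 - p - q)`.

The last four terms of the minimum in `G` have minimum `min 1 u⁻² * min 1 v⁻²`. If the terms
`s⁴u⁻²` and `t⁴v⁻²` are dropped, the `(s, t)`-integral is therefore a constant times a product of
a function of `u` and the same function of `v`, whose integral over `(0, ∞)` is `2 / (1 - θ)`.
Dropping them increases `G`, which yields the upper bound. For `n ^ (-1/2) ≤ v ≤ 1` dropping them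
does not change the minimum, and the strip `n ^ (-1/2) < v ≤ 1` already carries a fixed proportion
of the `v`-integral once `n ^ (1 - θ)` is bounded away from `1`.
-/

lemma setLIntegral_Ioc_rpow {r a b : ℝ} (hr : -1 < r) (ha : 0 ≤ a) (hab : a ≤ b) :
    ∫⁻ x in Ioc a b, ENNReal.ofReal (x ^ r) =
      ENNReal.ofReal ((b ^ (r + 1) - a ^ (r + 1)) / (r + 1)) := by
  have integrable : IntervalIntegrable (fun x : ℝ ↦ x ^ r) volume a b :=
    intervalIntegral.intervalIntegrable_rpow' hr
  rw [← integral_rpow (Or.inl hr), intervalIntegral.integral_of_le hab]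
  refine (ofReal_integral_eq_lintegral_ofReal integrable.1 ?_).symm
  exact ae_restrict_of_forall_mem measurableSet_Ioc fun x hx ↦ rpow_nonneg (ha.trans hx.1.le) r

lemma setLIntegral_Ioi_rpow {r a : ℝ} (hr : r < -1) (ha : 0 < a) :
    ∫⁻ x in Ioi a, ENNReal.ofReal (x ^ r) = ENNReal.ofReal (-a ^ (r + 1) / (r + 1)) := by
  rw [← integral_Ioi_rpow_of_lt hr ha]
  refine (ofReal_integral_eq_lintegral_ofReal (integrableOn_Ioi_rpow_of_lt hr ha) ?_).symm
  exact ae_restrict_of_forall_mem measurableSet_Ioi fun x hx ↦ rpow_nonneg (ha.trans hx).le r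

lemma setLIntegral_prod_prod_prod_symm {α β γ δ : Type*} [MeasurableSpace α] [MeasurableSpace β]
    [MeasurableSpace γ] [MeasurableSpace δ] {μ : Measure α} {ν : Measure β} {ρ : Measure γ}
    {τ : Measure δ} [SFinite μ] [SFinite ν] [SFinite ρ] [SFinite τ] (S : Set α) (T : Set β)
    (U : Set γ) (V : Set δ) {f : α × β × γ × δ → ENNReal} (hf : Measurable f) :
    ∫⁻ p in S ×ˢ T ×ˢ U ×ˢ V, f p ∂μ.prod (ν.prod (ρ.prod τ)) =
      ∫⁻ v in V, ∫⁻ u in U, ∫⁻ t in T, ∫⁻ s in S, f (s, t, u, v) ∂μ ∂ν ∂ρ ∂τ := by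
  have hf_s : Measurable fun q ↦ ∫⁻ s in S, f (s, q) ∂μ := hf.lintegral_prod_left'
  have hf_t : Measurable fun q ↦ ∫⁻ t in T, ∫⁻ s in S, f (s, t, q) ∂μ ∂ν :=
    hf_s.lintegral_prod_left'
  rw [setLIntegral_prod_symm _ hf.aemeasurable, setLIntegral_prod_symm _ hf_s.aemeasurable,
    setLIntegral_prod_symm _ hf_t.aemeasurable]

lemma min_rpow {x y r : ℝ} (hx : 0 ≤ x) (hy : 0 ≤ y) (hr : 0 ≤ r) :
    min x y ^ r = min (x ^ r) (y ^ r) :=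
  (monotoneOn_rpow_Ici_of_exponent_nonneg hr).map_min hx hy

lemma lintegral_rpow_mul_min_rpow {p β R : ℝ} (hp₀ : 0 < p) (hp₁ : p < 1) (hβ : 0 < β)
    (hR : 0 < R) :
    ∫⁻ x in Ioi (0 : ℝ), ENNReal.ofReal (x ^ (-1 - p * β) * min (x ^ β) (R ^ β)) =
      ENNReal.ofReal (R ^ ((1 - p) * β) / (β * p * (1 - p))) := by
  have hq : 0 < 1 - p := sub_pos.2 hp₁
  have below : ∫⁻ x in Ioc 0 R, ENNReal.ofReal (x ^ (-1 - p * β) * min (x ^ β) (R ^ β)) =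
      ENNReal.ofReal (R ^ ((1 - p) * β) / ((1 - p) * β)) := by
    have integrand_eq : ∀ x ∈ Ioc 0 R, ENNReal.ofReal (x ^ (-1 - p * β) * min (x ^ β) (R ^ β)) =
        ENNReal.ofReal (x ^ ((1 - p) * β - 1)) := fun x hx ↦ by
      rw [min_eq_left (rpow_le_rpow hx.1.le hx.2 hβ.le), ← rpow_add hx.1]
      ring_nf
    rw [setLIntegral_congr_fun measurableSet_Ioc integrand_eq,
      setLIntegral_Ioc_rpow (by linarith [mul_pos hq hβ]) le_rfl hR.le, sub_add_cancel,
      zero_rpow (by positivity), sub_zero]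
  have above : ∫⁻ x in Ioi R, ENNReal.ofReal (x ^ (-1 - p * β) * min (x ^ β) (R ^ β)) =
      ENNReal.ofReal (R ^ ((1 - p) * β) / (p * β)) := by
    have integrand_eq : ∀ x ∈ Ioi R, ENNReal.ofReal (x ^ (-1 - p * β) * min (x ^ β) (R ^ β)) =
        ENNReal.ofReal (R ^ β) * ENNReal.ofReal (x ^ (-1 - p * β)) := fun x hx ↦ by
      rw [min_eq_right (rpow_le_rpow hR.le hx.le hβ.le), mul_comm,
        ENNReal.ofReal_mul (by positivity)]
    rw [setLIntegral_congr_fun measurableSet_Ioi integrand_eq,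
      lintegral_const_mul' _ _ ENNReal.ofReal_ne_top,
      setLIntegral_Ioi_rpow (by linarith [mul_pos hp₀ hβ]) hR,
      ← ENNReal.ofReal_mul (by positivity), show -1 - p * β + 1 = -(p * β) by ring, neg_div_neg_eq,
      ← mul_div_assoc, ← rpow_add hR, show β + -(p * β) = (1 - p) * β by ring]
  rw [← Ioc_union_Ioi_eq_Ioi hR.le, lintegral_union measurableSet_Ioi (Ioc_disjoint_Ioi le_rfl),
    below, above, ← ENNReal.ofReal_add (by positivity) (by positivity)]
  congr 1
  field_simp
  ring

theorem lintegral_rpow_mul_min {p β a c : ℝ} (hp₀ : 0 < p) (hp₁ : p < 1) (hβ : 0 < β)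
    (ha : 0 < a) (hc : 0 < c) :
    ∫⁻ x in Ioi (0 : ℝ), ENNReal.ofReal (x ^ (-1 - p * β) * min (a * x ^ β) c) =
      ENNReal.ofReal (a ^ p * c ^ (1 - p) / (β * p * (1 - p))) := by
  obtain ⟨R, hR, rfl⟩ : ∃ R, 0 < R ∧ a * R ^ β = c := by
    refine ⟨(c / a) ^ β⁻¹, by positivity, ?_⟩
    rw [rpow_inv_rpow (by positivity) hβ.ne', mul_div_cancel₀ _ ha.ne']
  have factor_out : ∀ x : ℝ, ENNReal.ofReal (x ^ (-1 - p * β) * min (a * x ^ β) (a * R ^ β)) =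
      ENNReal.ofReal a * ENNReal.ofReal (x ^ (-1 - p * β) * min (x ^ β) (R ^ β)) := fun x ↦ by
    rw [← mul_min_of_nonneg _ _ ha.le, mul_left_comm, ENNReal.ofReal_mul ha.le]
  have homogeneous : a ^ p * (a * R ^ β) ^ (1 - p) = a * R ^ ((1 - p) * β) := by
    rw [mul_rpow ha.le (by positivity), ← mul_assoc, ← rpow_add ha, add_sub_cancel, rpow_one,
      ← rpow_mul hR.le, mul_comm β]
  simp_rw [factor_out]
  rw [lintegral_const_mul' _ _ ENNReal.ofReal_ne_top, lintegral_rpow_mul_min_rpow hp₀ hp₁ hβ hR,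
    ← ENNReal.ofReal_mul ha.le, homogeneous, mul_div_assoc]

theorem lintegral_lintegral_rpow_mul_rpow_mul_min {p q β γ a b c : ℝ} (hp : 0 < p) (hq : 0 < q)
    (hpq : p + q < 1) (hβ : 0 < β) (hγ : 0 < γ) (ha : 0 < a) (hb : 0 < b) (hc : 0 < c) :
    ∫⁻ t in Ioi (0 : ℝ), ∫⁻ s in Ioi (0 : ℝ),
        ENNReal.ofReal (t ^ (-1 - q * γ) * (s ^ (-1 - p * β) *
          min (a * s ^ β) (min (b * t ^ γ) c))) =
      ENNReal.ofReal (a ^ p * b ^ q * c ^ (1 - p - q) / (β * γ * p * q * (1 - p - q))) := by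
  have hp' : 0 < 1 - p := by linarith
  have hr : 0 < 1 - p - q := by linarith
  have inner : ∀ t ∈ Ioi (0 : ℝ), ∫⁻ s in Ioi (0 : ℝ),
      ENNReal.ofReal (t ^ (-1 - q * γ) * (s ^ (-1 - p * β) *
        min (a * s ^ β) (min (b * t ^ γ) c))) =
      ENNReal.ofReal (a ^ p / (β * p * (1 - p))) *
        ENNReal.ofReal (t ^ (-1 - q / (1 - p) * (γ * (1 - p))) *
          min (b ^ (1 - p) * t ^ (γ * (1 - p))) (c ^ (1 - p))) := by
    rintro t (ht : 0 < t)
    simp_rw [ENNReal.ofReal_mul (rpow_nonneg ht.le (-1 - q * γ))]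
    rw [lintegral_const_mul' _ _ ENNReal.ofReal_ne_top,
      lintegral_rpow_mul_min hp (by linarith) hβ ha (by positivity),
      min_rpow (by positivity) hc.le hp'.le, mul_rpow hb.le (by positivity), ← rpow_mul ht.le,
      ← ENNReal.ofReal_mul (by positivity), ← ENNReal.ofReal_mul (by positivity),
      show q / (1 - p) * (γ * (1 - p)) = q * γ by field_simp]
    congr 1
    ring
  rw [setLIntegral_congr_fun measurableSet_Ioi inner,
    lintegral_const_mul' _ _ ENNReal.ofReal_ne_top,
    lintegral_rpow_mul_min (by positivity) ((div_lt_one hp').2 (by linarith)) (by positivity)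
      (by positivity) (by positivity),
    ← ENNReal.ofReal_mul (by positivity), ← rpow_mul hb.le, ← rpow_mul hc.le,
    mul_div_cancel₀ q hp'.ne', mul_one_sub (1 - p), mul_div_cancel₀ q hp'.ne']
  congr 1
  field_simp

/-- The truncation `min 1 x⁻²`; the last four terms of the minimum in `G` have minimum
`truncation u * truncation v`. -/
noncomputable def truncation (x : ℝ) : ℝ := min 1 (x ^ (-2 : ℝ))

/-- The marginal density in each of `u` and `v`, up to constants, after integrating out `s`
and `t`. -/
noncomputable def marginal (θ x : ℝ) : ℝ := x ^ (-θ) * truncation x ^ (1 - θ)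

/-- The integrand `G` with the terms `s⁴u⁻²` and `t⁴v⁻²` omitted from the minimum, and with a real
parameter `N` in place of `n`. -/
noncomputable def majorant (θ N : ℝ) (p : ℝ × ℝ × ℝ × ℝ) : ℝ :=
  N ^ 2 * (p.2.1 ^ (-1 - 2 * θ) * (p.1 ^ (-1 - 2 * θ) *
    min (N⁻¹ * p.2.2.1 ^ (-2 : ℝ) * p.2.2.2 ^ (-2 : ℝ) * p.1 ^ (4 : ℝ))
      (min (N⁻¹ * p.2.1 ^ (4 : ℝ)) (truncation p.2.2.1 * truncation p.2.2.2))))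

variable {θ N : ℝ} {n : ℕ}

lemma truncation_pos {x : ℝ} (hx : 0 < x) : 0 < truncation x :=
  lt_min one_pos (rpow_pos_of_pos hx _)

lemma marginal_nonneg {x : ℝ} (hx : 0 < x) : 0 ≤ marginal θ x :=
  mul_nonneg (rpow_nonneg hx.le _) (rpow_nonneg (truncation_pos hx).le _)

lemma truncation_mul_truncation {u v : ℝ} (hu : 0 ≤ u) (hv : 0 ≤ v) :
    truncation u * truncation v =
      min (min (u ^ (-2 : ℝ) * v ^ (-2 : ℝ)) (u ^ (-2 : ℝ))) (min 1 (v ^ (-2 : ℝ))) := by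
  have hu' : 0 ≤ u ^ (-2 : ℝ) := rpow_nonneg hu _
  have hv' : 0 ≤ min 1 (v ^ (-2 : ℝ)) := le_min zero_le_one (rpow_nonneg hv _)
  rw [truncation, truncation, min_mul_of_nonneg _ _ hv', one_mul, mul_min_of_nonneg _ _ hu',
    mul_one, min_comm, min_comm (u ^ (-2 : ℝ))]

lemma G_eq_mul_min {s t u v : ℝ} (hu : 0 ≤ u) (hv : 0 ≤ v) :
    G θ n (s, t, u, v) = (n : ℝ) ^ 2 * (t ^ (-1 - 2 * θ) * (s ^ (-1 - 2 * θ) *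
      min (min (s ^ (4 : ℝ) * u ^ (-2 : ℝ)) (t ^ (4 : ℝ) * v ^ (-2 : ℝ)))
        (min ((n : ℝ)⁻¹ * u ^ (-2 : ℝ) * v ^ (-2 : ℝ) * s ^ (4 : ℝ))
          (min ((n : ℝ)⁻¹ * t ^ (4 : ℝ)) (truncation u * truncation v))))) := by
  simp only [truncation_mul_truncation hu hv, G]
  ac_rfl

lemma G_le_majorant {p : ℝ × ℝ × ℝ × ℝ} (hp : p ∈ A n) : G θ n p ≤ majorant θ n p := by
  obtain ⟨s, t, u, v⟩ := p
  obtain ⟨hs : 0 < s, ht : 0 < t, hu : 0 < u, hv : 0 < v⟩ := hp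
  rw [G_eq_mul_min hu.le hv.le, majorant]
  gcongr (n : ℝ) ^ 2 * (t ^ (-1 - 2 * θ) * (s ^ (-1 - 2 * θ) * ?_))
  exact min_le_right _ _

lemma G_eq_majorant {p : ℝ × ℝ × ℝ × ℝ} (hp : p ∈ A n) (hn : 0 < n)
    (hv_ge : (n : ℝ) ^ (-1 / 2 : ℝ) ≤ p.2.2.2) (hv_le : p.2.2.2 ≤ 1) :
    G θ n p = majorant θ n p := by
  obtain ⟨s, t, u, v⟩ := p
  obtain ⟨hs : 0 < s, ht : 0 < t, hu : 0 < u, hv : 0 < v⟩ := hp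
  change _ ≤ v at hv_ge
  change v ≤ 1 at hv_le
  have hn_pos : (0 : ℝ) < n := Nat.cast_pos.2 hn
  have inv_mul_le_one : (n : ℝ)⁻¹ * v ^ (-2 : ℝ) ≤ 1 := by
    rw [inv_mul_le_one₀ hn_pos]
    calc v ^ (-2 : ℝ) ≤ ((n : ℝ) ^ (-1 / 2 : ℝ)) ^ (-2 : ℝ) :=
          rpow_le_rpow_of_nonpos (by positivity) hv_ge (by norm_num)
      _ = n := by rw [← rpow_mul hn_pos.le]; norm_num
  have inv_le : (n : ℝ)⁻¹ ≤ v ^ (-2 : ℝ) :=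
    (Nat.cast_inv_le_one n).trans
      (one_le_rpow_of_pos_of_le_one_of_nonpos hv hv_le (by norm_num))
  rw [G_eq_mul_min hu.le hv.le, majorant, min_eq_right]
  refine min_le_min ?_ (min_le_of_left_le ?_)
  · calc (n : ℝ)⁻¹ * u ^ (-2 : ℝ) * v ^ (-2 : ℝ) * s ^ (4 : ℝ)
        = s ^ (4 : ℝ) * u ^ (-2 : ℝ) * ((n : ℝ)⁻¹ * v ^ (-2 : ℝ)) := by ring
      _ ≤ s ^ (4 : ℝ) * u ^ (-2 : ℝ) := mul_le_of_le_one_right (by positivity) inv_mul_le_one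
  · rw [mul_comm]
    gcongr

lemma lintegral_lintegral_majorant (hθ₀ : 0 < θ) (hθ₁ : θ < 1) (hN : 0 < N) {u v : ℝ}
    (hu : 0 < u) (hv : 0 < v) :
    ∫⁻ t in Ioi (0 : ℝ), ∫⁻ s in Ioi (0 : ℝ), ENNReal.ofReal (majorant θ N (s, t, u, v)) =
      ENNReal.ofReal (N ^ (2 - θ) / (4 * θ ^ 2 * (1 - θ)) * (marginal θ u * marginal θ v)) := by
  have hu' := truncation_pos hu
  have hv' := truncation_pos hv
  have mellin := lintegral_lintegral_rpow_mul_rpow_mul_min (p := θ / 2) (q := θ / 2) (β := 4)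
    (γ := 4) (a := N⁻¹ * u ^ (-2 : ℝ) * v ^ (-2 : ℝ)) (b := N⁻¹)
    (c := truncation u * truncation v) (by positivity) (by positivity) (by linarith) (by norm_num)
    (by norm_num) (by positivity) (by positivity) (by positivity)
  rw [show -1 - θ / 2 * 4 = -1 - 2 * θ by ring, show 1 - θ / 2 - θ / 2 = 1 - θ by ring] at mellin
  have scaling : N ^ 2 * (N⁻¹ ^ (θ / 2) * N⁻¹ ^ (θ / 2)) = N ^ (2 - θ) := by
    rw [← rpow_add (by positivity), add_halves, inv_rpow hN.le, ← rpow_neg hN.le, ← rpow_two,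
      ← rpow_add hN, sub_eq_add_neg]
  have exponent : ∀ x : ℝ, 0 < x → (x ^ (-2 : ℝ)) ^ (θ / 2) = x ^ (-θ) := fun x hx ↦ by
    rw [← rpow_mul hx.le]
    ring_nf
  simp_rw [majorant, ENNReal.ofReal_mul (show 0 ≤ N ^ 2 by positivity),
    lintegral_const_mul' _ _ ENNReal.ofReal_ne_top, mellin]
  rw [← ENNReal.ofReal_mul (by positivity), ← scaling, mul_rpow (by positivity) (by positivity),
    mul_rpow (by positivity) (by positivity), mul_rpow hu'.le hv'.le, exponent u hu, exponent v hv,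
    marginal, marginal]
  congr 1
  field_simp
  norm_num

lemma lintegral_majorant (hθ₀ : 0 < θ) (hθ₁ : θ < 1) (hN : 0 < N) {U V : Set ℝ}
    (hU : MeasurableSet U) (hV : MeasurableSet V) (hU_pos : U ⊆ Ioi 0) (hV_pos : V ⊆ Ioi 0) :
    ∫⁻ p in Ioi (0 : ℝ) ×ˢ Ioi (0 : ℝ) ×ˢ U ×ˢ V, ENNReal.ofReal (majorant θ N p) =
      ENNReal.ofReal (N ^ (2 - θ) / (4 * θ ^ 2 * (1 - θ))) *
        ((∫⁻ u in U, ENNReal.ofReal (marginal θ u)) *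
          ∫⁻ v in V, ENNReal.ofReal (marginal θ v)) := by
  have : 0 < 1 - θ := sub_pos.2 hθ₁
  have measurable_majorant : Measurable fun p ↦ ENNReal.ofReal (majorant θ N p) := by
    unfold majorant truncation
    fun_prop
  have measurable_marginal : Measurable fun x ↦ ENNReal.ofReal (marginal θ x) := by
    unfold marginal truncation
    fun_prop
  have separated : ∀ v ∈ V, ∀ u ∈ U, ∫⁻ t in Ioi (0 : ℝ), ∫⁻ s in Ioi (0 : ℝ),
      ENNReal.ofReal (majorant θ N (s, t, u, v)) =
        ENNReal.ofReal (N ^ (2 - θ) / (4 * θ ^ 2 * (1 - θ))) *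
          (ENNReal.ofReal (marginal θ u) * ENNReal.ofReal (marginal θ v)) := fun v hv u hu ↦ by
    rw [lintegral_lintegral_majorant hθ₀ hθ₁ hN (hU_pos hu) (hV_pos hv),
      ENNReal.ofReal_mul (by positivity), ENNReal.ofReal_mul (marginal_nonneg (hU_pos hu))]
  simp only [Measure.volume_eq_prod]
  rw [setLIntegral_prod_prod_prod_symm _ _ U V measurable_majorant,
    setLIntegral_congr_fun hV fun v hv ↦ setLIntegral_congr_fun hU (separated v hv)]
  simp_rw [lintegral_const_mul' _ _ ENNReal.ofReal_ne_top,
    lintegral_mul_const' _ _ ENNReal.ofReal_ne_top]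
  rw [lintegral_const_mul _ measurable_marginal]

lemma lintegral_Ioi_marginal (hθ : θ < 1) :
    ∫⁻ x in Ioi (0 : ℝ), ENNReal.ofReal (marginal θ x) = ENNReal.ofReal (2 / (1 - θ)) := by
  have hθ' : 0 < 1 - θ := sub_pos.2 hθ
  have marginal_eq : ∀ x ∈ Ioi (0 : ℝ), ENNReal.ofReal (marginal θ x) =
      ENNReal.ofReal (x ^ (-1 - 1 / 2 * (2 * (1 - θ))) * min (1 * x ^ (2 * (1 - θ))) 1) := by
    rintro x (hx : 0 < x)
    rw [marginal, truncation, min_rpow zero_le_one (by positivity) hθ'.le, one_rpow,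
      ← rpow_mul hx.le, one_mul, mul_min_of_nonneg _ _ (by positivity),
      mul_min_of_nonneg _ _ (by positivity), ← rpow_add hx, ← rpow_add hx]
    ring_nf
  rw [setLIntegral_congr_fun measurableSet_Ioi marginal_eq,
    lintegral_rpow_mul_min (by norm_num) (by norm_num) (by positivity) one_pos one_pos,
    one_rpow, one_rpow]
  congr 1
  field_simp
  norm_num

lemma lintegral_Ioc_marginal (hθ : θ < 1) {ε : ℝ} (hε₀ : 0 ≤ ε) (hε₁ : ε ≤ 1) :
    ∫⁻ x in Ioc ε 1, ENNReal.ofReal (marginal θ x) =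
      ENNReal.ofReal ((1 - ε ^ (1 - θ)) / (1 - θ)) := by
  have marginal_eq : ∀ x ∈ Ioc ε 1, ENNReal.ofReal (marginal θ x) =
      ENNReal.ofReal (x ^ (-θ)) := fun x hx ↦ by
    have truncation_eq : truncation x = 1 := min_eq_left
      (one_le_rpow_of_pos_of_le_one_of_nonpos (hε₀.trans_lt hx.1) hx.2 (by norm_num))
    rw [marginal, truncation_eq, one_rpow, mul_one]
  rw [setLIntegral_congr_fun measurableSet_Ioc marginal_eq,
    setLIntegral_Ioc_rpow (by linarith) hε₀ hε₁, one_rpow, neg_add_eq_sub]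

lemma A_eq_prod (n : ℕ) : A n = Ioi (0 : ℝ) ×ˢ Ioi (0 : ℝ) ×ˢ Ioi (0 : ℝ) ×ˢ Ioi (0 : ℝ) :=
  rfl

lemma measurableSet_A (n : ℕ) : MeasurableSet (A n) := by
  rw [A_eq_prod]
  measurability

lemma lintegral_G_le (hθ₀ : 0 < θ) (hθ₁ : θ < 1) (hn : 0 < n) :
    ∫⁻ p in A n, ENNReal.ofReal (G θ n p) ≤
      ENNReal.ofReal ((n : ℝ) ^ (2 - θ) / (θ ^ 2 * (1 - θ) ^ 3)) := by
  have hθ' : 0 < 1 - θ := sub_pos.2 hθ₁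
  calc ∫⁻ p in A n, ENNReal.ofReal (G θ n p)
      ≤ ∫⁻ p in A n, ENNReal.ofReal (majorant θ n p) :=
        setLIntegral_mono' (measurableSet_A n) fun p hp ↦
          ENNReal.ofReal_le_ofReal (G_le_majorant hp)
    _ = ENNReal.ofReal ((n : ℝ) ^ (2 - θ) / (θ ^ 2 * (1 - θ) ^ 3)) := by
        rw [A_eq_prod, lintegral_majorant hθ₀ hθ₁ (Nat.cast_pos.2 hn) measurableSet_Ioi
            measurableSet_Ioi subset_rfl subset_rfl, lintegral_Ioi_marginal hθ₁,
          ← ENNReal.ofReal_mul (by positivity), ← ENNReal.ofReal_mul (by positivity)]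
        congr 1
        field_simp
        norm_num

lemma le_lintegral_G (hθ₀ : 0 < θ) (hθ₁ : θ < 1) (hn : 0 < n) :
    ENNReal.ofReal ((1 - (n : ℝ) ^ (-(1 - θ) / 2)) / 2 *
        ((n : ℝ) ^ (2 - θ) / (θ ^ 2 * (1 - θ) ^ 3))) ≤
      ∫⁻ p in A n, ENNReal.ofReal (G θ n p) := by
  have hθ' : 0 < 1 - θ := sub_pos.2 hθ₁
  have hn_pos : (0 : ℝ) < n := Nat.cast_pos.2 hn
  set ε : ℝ := (n : ℝ) ^ (-1 / 2 : ℝ) with hε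
  have hε_pos : 0 < ε := by positivity
  have hε_le : ε ≤ 1 :=
    rpow_le_one_of_one_le_of_nonpos (Nat.one_le_cast.2 hn) (by norm_num)
  have hε_rpow : ε ^ (1 - θ) = (n : ℝ) ^ (-(1 - θ) / 2) := by
    rw [hε, ← rpow_mul hn_pos.le]
    ring_nf
  have pos_of_mem : Ioc ε 1 ⊆ Ioi 0 := fun v hv ↦ hε_pos.trans hv.1
  have box_subset : Ioi (0 : ℝ) ×ˢ Ioi (0 : ℝ) ×ˢ Ioi (0 : ℝ) ×ˢ Ioc ε 1 ⊆ A n := by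
    rw [A_eq_prod]
    gcongr
  calc ENNReal.ofReal ((1 - (n : ℝ) ^ (-(1 - θ) / 2)) / 2 *
        ((n : ℝ) ^ (2 - θ) / (θ ^ 2 * (1 - θ) ^ 3)))
      = ∫⁻ p in Ioi (0 : ℝ) ×ˢ Ioi (0 : ℝ) ×ˢ Ioi (0 : ℝ) ×ˢ Ioc ε 1,
          ENNReal.ofReal (majorant θ n p) := by
        rw [lintegral_majorant hθ₀ hθ₁ hn_pos measurableSet_Ioi measurableSet_Ioc subset_rfl
            pos_of_mem, lintegral_Ioi_marginal hθ₁, lintegral_Ioc_marginal hθ₁ hε_pos.le hε_le,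
          hε_rpow, ← ENNReal.ofReal_mul (by positivity), ← ENNReal.ofReal_mul (by positivity)]
        congr 1
        field_simp
        ring
    _ = ∫⁻ p in Ioi (0 : ℝ) ×ˢ Ioi (0 : ℝ) ×ˢ Ioi (0 : ℝ) ×ˢ Ioc ε 1,
          ENNReal.ofReal (G θ n p) :=
        setLIntegral_congr_fun (by measurability) fun p hp ↦ by
          rw [G_eq_majorant (box_subset hp) hn hp.2.2.2.1.le hp.2.2.2.2]
    _ ≤ ∫⁻ p in A n, ENNReal.ofReal (G θ n p) := lintegral_mono_set box_subset

lemma ae_restrict_A_G_nonneg : 0 ≤ᵐ[volume.restrict (A n)] G θ n :=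
  ae_restrict_of_forall_mem (measurableSet_A n) fun p ⟨hs, ht, hu, hv⟩ ↦ by
    simp only [Pi.zero_apply, G]
    positivity

theorem integrableOn_G (hθ₀ : 0 < θ) (hθ₁ : θ < 1) (hn : 0 < n) :
    IntegrableOn (G θ n) (A n) := by
  have measurable_G : Measurable (G θ n) := by
    unfold G
    fun_prop
  exact (lintegral_ofReal_ne_top_iff_integrable measurable_G.aestronglyMeasurable
    ae_restrict_A_G_nonneg).1 (ne_top_of_le_ne_top ENNReal.ofReal_ne_top
      (lintegral_G_le hθ₀ hθ₁ hn))

theorem integral_G_le (hθ₀ : 0 < θ) (hθ₁ : θ < 1) (hn : 0 < n) :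
    ∫ p in A n, G θ n p ≤ (n : ℝ) ^ (2 - θ) / (θ ^ 2 * (1 - θ) ^ 3) := by
  have : 0 < 1 - θ := sub_pos.2 hθ₁
  rw [← ENNReal.ofReal_le_ofReal_iff (by positivity),
    ofReal_integral_eq_lintegral_ofReal (integrableOn_G hθ₀ hθ₁ hn) ae_restrict_A_G_nonneg]
  exact lintegral_G_le hθ₀ hθ₁ hn

theorem le_integral_G (hθ₀ : 0 < θ) (hθ₁ : θ < 1) (hn : 0 < n) :
    (1 - (n : ℝ) ^ (-(1 - θ) / 2)) / 2 * ((n : ℝ) ^ (2 - θ) / (θ ^ 2 * (1 - θ) ^ 3)) ≤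
      ∫ p in A n, G θ n p := by
  rw [← ENNReal.ofReal_le_ofReal_iff (integral_nonneg_of_ae ae_restrict_A_G_nonneg),
    ofReal_integral_eq_lintegral_ofReal (integrableOn_G hθ₀ hθ₁ hn) ae_restrict_A_G_nonneg]
  exact le_lintegral_G hθ₀ hθ₁ hn

theorem stmt_3_general :
    (∃ C : ℝ, 0 < C ∧ ∀ θ : ℝ, 0 < θ → θ < 1 → ∀ n : ℕ, 0 < n →
      (∫ p in A n, G θ n p) ≤ C * ((n : ℝ) ^ (2 - θ) * θ ^ (-2 : ℝ) * (1 - θ) ^ (-3 : ℝ))) ∧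
    ∀ κ : ℝ, 1 < κ → ∃ c : ℝ, 0 < c ∧ ∀ θ : ℝ, 0 < θ → θ < 1 → ∀ n : ℕ, 0 < n →
      κ ≤ (n : ℝ) ^ (1 - θ) →
      c * ((n : ℝ) ^ (2 - θ) * θ ^ (-2 : ℝ) * (1 - θ) ^ (-3 : ℝ)) ≤ ∫ p in A n, G θ n p := by
  have rate_eq : ∀ (θ : ℝ) (n : ℕ), (n : ℝ) ^ (2 - θ) * θ ^ (-2 : ℝ) * (1 - θ) ^ (-3 : ℝ) =
      (n : ℝ) ^ (2 - θ) / (θ ^ 2 * (1 - θ) ^ 3) := fun θ n ↦ by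
    rw [rpow_neg_ofNat, rpow_neg_ofNat, mul_assoc, div_eq_mul_inv, mul_inv]
    norm_cast
  simp only [rate_eq]
  refine ⟨⟨1, one_pos, fun θ hθ₀ hθ₁ n hn ↦ by simpa using integral_G_le hθ₀ hθ₁ hn⟩,
    fun κ hκ ↦ ⟨(1 - κ ^ (-1 / 2 : ℝ)) / 2, ?_, fun θ hθ₀ hθ₁ n hn hκn ↦ ?_⟩⟩
  · linarith [rpow_lt_one_of_one_lt_of_neg hκ (show (-1 / 2 : ℝ) < 0 by norm_num)]
  · have : 0 < 1 - θ := sub_pos.2 hθ₁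
    have rpow_le : (n : ℝ) ^ (-(1 - θ) / 2) ≤ κ ^ (-1 / 2 : ℝ) := by
      calc (n : ℝ) ^ (-(1 - θ) / 2) = ((n : ℝ) ^ (1 - θ)) ^ (-1 / 2 : ℝ) := by
            rw [← rpow_mul n.cast_nonneg]
            ring_nf
        _ ≤ κ ^ (-1 / 2 : ℝ) := rpow_le_rpow_of_nonpos (by positivity) hκn (by norm_num)
    refine le_trans ?_ (le_integral_G hθ₀ hθ₁ hn)
    gcongr

theorem stmt_3 :
    (∃ C : ℝ, 0 < C ∧ ∀ θ : ℝ, 0 < θ → θ < 1 → ∀ n : ℕ, 0 < n →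
      (∫ p in A n, G θ n p) ≤ C * ((n : ℝ) ^ (2 - θ) * θ ^ (-2 : ℝ) * (1 - θ) ^ (-3 : ℝ))) ∧
    (∃ c : ℝ, 0 < c ∧ ∀ θ : ℝ, 0 < θ → θ < 1 → ∀ n : ℕ, 0 < n →
      (8 : ℝ) ≤ (n : ℝ) ^ (1 - θ) →
      c * ((n : ℝ) ^ (2 - θ) * θ ^ (-2 : ℝ) * (1 - θ) ^ (-3 : ℝ)) ≤ ∫ p in A n, G θ n p) :=
  ⟨stmt_3_general.1, stmt_3_general.2 8 (by norm_num)⟩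
end

section
/- Let Ψ : [0,∞) → [0,∞) satisfy Ψ(0) = 0 and suppose that the function x ↦ Ψ(x)/x is nondecreasing on (0,∞). Then there exists a convex function Ψ̃ : [0,∞) → [0,∞) such that Ψ(x/2) ≤ Ψ̃(x) ≤ Ψ(x) for all x ≥ 0. In particular, if in addition Ψ(2x) ≤ 4 Ψ(x) for all x ≥ 0, then Ψ(x)/4 ≤ Ψ̃(x) ≤ Ψ(x) for all x ≥ 0, so Ψ is equivalent to a convex (Orlicz) function. -/
/-!
Write `Ψ x = x * q x` with `q` nondecreasing and nonnegative. The primitive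
`Ψt x = ∫ t in 0..x, q t` is convex because its density is nondecreasing. On `[0, x]` the density
is at most `q x`, so `Ψt x ≤ x * q x = Ψ x`; discarding `[0, x / 2]` and bounding `q` below by
`q (x / 2)` on the other half gives `Ψt x ≥ (x / 2) * q (x / 2) = Ψ (x / 2)`.
-/

open MeasureTheory Set

section MonotoneIntegral

variable {q : ℝ → ℝ} {a b : ℝ}

theorem sub_mul_le_integral_of_monotoneOn (hab : a ≤ b) (hq : MonotoneOn q (Icc a b)) :
    (b - a) * q a ≤ ∫ t in a..b, q t := by
  have hint : IntervalIntegrable q volume a b := (uIcc_of_le hab ▸ hq).intervalIntegrable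
  calc (b - a) * q a = ∫ _ in a..b, q a := by rw [intervalIntegral.integral_const, smul_eq_mul]
    _ ≤ ∫ t in a..b, q t := intervalIntegral.integral_mono_on hab intervalIntegrable_const hint
      fun t ht => hq (left_mem_Icc.2 hab) ht ht.1

theorem integral_le_sub_mul_of_monotoneOn (hab : a ≤ b) (hq : MonotoneOn q (Icc a b)) :
    ∫ t in a..b, q t ≤ (b - a) * q b := by
  have hint : IntervalIntegrable q volume a b := (uIcc_of_le hab ▸ hq).intervalIntegrable
  calc ∫ t in a..b, q t ≤ ∫ _ in a..b, q b :=
        intervalIntegral.integral_mono_on hab hint intervalIntegrable_const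
          fun t ht => hq ht (right_mem_Icc.2 hab) ht.2
    _ = (b - a) * q b := by rw [intervalIntegral.integral_const, smul_eq_mul]

theorem sub_mul_le_integral_of_monotoneOn_of_nonneg {c : ℝ} (hc : c ∈ Icc a b)
    (hq : MonotoneOn q (Icc a b)) (hqa : 0 ≤ q a) :
    (b - c) * q c ≤ ∫ t in a..b, q t := by
  have hab : a ≤ b := hc.1.trans hc.2
  have hint : IntervalIntegrable q volume a b := (uIcc_of_le hab ▸ hq).intervalIntegrable
  have hnonneg : ∀ t ∈ Ioc a b, 0 ≤ q t := fun t ht =>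
    hqa.trans (hq (left_mem_Icc.2 hab) (Ioc_subset_Icc_self ht) ht.1.le)
  calc (b - c) * q c ≤ ∫ t in c..b, q t :=
        sub_mul_le_integral_of_monotoneOn hc.2 (hq.mono (Icc_subset_Icc_left hc.1))
    _ ≤ ∫ t in a..b, q t := intervalIntegral.integral_mono_interval hc.1 hc.2 le_rfl
      (ae_restrict_of_forall_mem measurableSet_Ioc hnonneg) hint

theorem convexOn_integral_of_monotoneOn {s : Set ℝ} (hs : Convex ℝ s) (ha : a ∈ s)
    (hq : MonotoneOn q s) : ConvexOn ℝ s fun x => ∫ t in a..x, q t := by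
  have hint {x : ℝ} (hx : x ∈ s) : IntervalIntegrable q volume a x :=
    (hq.mono (hs.ordConnected.uIcc_subset ha hx)).intervalIntegrable
  refine convexOn_of_slope_mono_adjacent hs fun {x y z} hx hz hxy hyz => ?_
  have hy : y ∈ s := hs.ordConnected.out hx hz ⟨hxy.le, hyz.le⟩
  rw [intervalIntegral.integral_interval_sub_left (hint hy) (hint hx),
    intervalIntegral.integral_interval_sub_left (hint hz) (hint hy)]
  calc (∫ t in x..y, q t) / (y - x) ≤ q y := by
        rw [div_le_iff₀' (sub_pos.2 hxy)]
        exact integral_le_sub_mul_of_monotoneOn hxy.le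
          (hq.mono (hs.ordConnected.out hx hy))
    _ ≤ (∫ t in y..z, q t) / (z - y) := by
        rw [le_div_iff₀' (sub_pos.2 hyz)]
        exact sub_mul_le_integral_of_monotoneOn hyz.le
          (hq.mono (hs.ordConnected.out hy hz))

end MonotoneIntegral

-- At the endpoint `0` this uses the convention `Ψ 0 / 0 = 0`.
theorem monotoneOn_div_self_Ici {K : Type*} [Field K] [LinearOrder K] [IsStrictOrderedRing K]
    {Ψ : K → K} (hnonneg : ∀ x, 0 < x → 0 ≤ Ψ x) (hmono : MonotoneOn (fun x => Ψ x / x) (Ioi 0)) :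
    MonotoneOn (fun x => Ψ x / x) (Ici 0) := by
  rw [← Ioi_insert, monotoneOn_insert_iff]
  refine ⟨fun x hx hx0 => absurd hx0 (not_le.2 hx), fun x hx _ => ?_, hmono⟩
  simpa only [div_zero] using div_nonneg (hnonneg x hx) (le_of_lt hx)

theorem stmt_17 (Ψ : ℝ → ℝ) (hΨ0 : Ψ 0 = 0) (hΨnn : ∀ x, 0 ≤ x → 0 ≤ Ψ x)
    (hmono : ∀ x y, 0 < x → x ≤ y → Ψ x / x ≤ Ψ y / y) :
    ∃ Ψt : ℝ → ℝ, ConvexOn ℝ (Set.Ici 0) Ψt ∧ (∀ x, 0 ≤ x → 0 ≤ Ψt x) ∧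
      (∀ x, 0 ≤ x → Ψ (x / 2) ≤ Ψt x ∧ Ψt x ≤ Ψ x) ∧
      ((∀ x, 0 ≤ x → Ψ (2 * x) ≤ 4 * Ψ x) → ∀ x, 0 ≤ x → Ψ x / 4 ≤ Ψt x) := by
  let q : ℝ → ℝ := fun x => Ψ x / x
  have hq : MonotoneOn q (Ici 0) := monotoneOn_div_self_Ici (fun x hx => hΨnn x hx.le)
    fun x hx y _ hxy => hmono x y hx hxy
  have hq0 : 0 ≤ q 0 := (div_zero (Ψ 0)).ge
  have hΨq (x : ℝ) : x * q x = Ψ x := mul_div_cancel_of_imp' fun hx => hx ▸ hΨ0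
  have lower (x : ℝ) (hx : 0 ≤ x) : Ψ (x / 2) ≤ ∫ t in 0..x, q t := by
    simpa only [sub_half, hΨq] using sub_mul_le_integral_of_monotoneOn_of_nonneg
      ⟨div_nonneg hx zero_le_two, half_le_self hx⟩ (hq.mono Icc_subset_Ici_self) hq0
  have upper (x : ℝ) (hx : 0 ≤ x) : ∫ t in 0..x, q t ≤ Ψ x := by
    simpa only [sub_zero, hΨq] using
      integral_le_sub_mul_of_monotoneOn hx (hq.mono Icc_subset_Ici_self)
  refine ⟨fun x => ∫ t in 0..x, q t, convexOn_integral_of_monotoneOn (convex_Ici 0) self_mem_Ici hq,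
    fun x hx => (hΨnn _ (div_nonneg hx zero_le_two)).trans (lower x hx),
    fun x hx => ⟨lower x hx, upper x hx⟩, fun hdouble x hx => ?_⟩
  have hhalf : Ψ x ≤ 4 * Ψ (x / 2) := by
    simpa only [mul_div_cancel₀ x two_ne_zero] using hdouble (x / 2) (div_nonneg hx zero_le_two)
  linarith [lower x hx]
end
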